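/- Let {ε_n} be a sequence in (0,1) with ε_n → 0 and n·ε_n → ∞. Then for all a ∈ ℝ and t > 0, the limit as n → ∞ of (π(e^{(n+a+ε_n)/t}) − π(e^{(n+a)/t})) / (e^{n/t} ε_n / n) equals e^{a/t}, where π is the prime counting function. -/

import Mathlib

open Real Filter

/-- Prime counting function at a real argument: number of primes `≤ x`. -/
noncomputable def primePi (x : ℝ) : ℕ := Nat.primeCounting ⌊x⌋₊

noncomputable def zq (m : ℕ) (s : ℂ) : ℂ :=
  (s - 1) * ((m : ℂ) + 1) ^ (-s) + ((m : ℂ) + 1) ^ (1 - s) - (m : ℂ) ^ (1 - s)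

lemma zq_bound (m : ℕ) (hm : 1 ≤ m) (s : ℂ) (hs : 0 < s.re) :
    ‖zq m s‖ ≤ ‖s‖ * ‖s - 1‖ * (m : ℝ) ^ (-s.re - 1) := by
  have hm0 : (0:ℝ) < m := by exact_mod_cast hm
  let φ : ℝ → ℂ := fun x => (x : ℂ) ^ (1 - s) + (s - 1) * ((x : ℂ) - m) * (x : ℂ) ^ (-s)
  have hd : ∀ x ∈ Set.Icc (m:ℝ) (m + 1), HasDerivWithinAt φ
      (-s * (s - 1) * ((x : ℂ) - m) * (x : ℂ) ^ (-s - 1)) (Set.Icc (m:ℝ) (m + 1)) x := by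
    intro x hx
    have hx0 : 0 < x := lt_of_lt_of_le hm0 hx.1
    have hsl : (x : ℂ) ∈ Complex.slitPlane := Or.inl (by simpa using hx0)
    have hid : HasDerivAt (fun z : ℂ => z) 1 (x : ℂ) := hasDerivAt_id _
    have h1 := hid.cpow_const (c := 1 - s) hsl
    have h2 := hid.cpow_const (c := -s) hsl
    have h3 := ((hid.sub_const (m : ℂ)).const_mul (s - 1)).mul h2
    have h4 := (h1.add h3).comp_ofReal.hasDerivWithinAt (s := Set.Icc (m:ℝ) (m + 1))
    refine h4.congr_deriv ?_
    have : (1 - s - 1) = -s := by ring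
    rw [this]
    ring
  have hb : ∀ x ∈ Set.Ico (m:ℝ) (m + 1),
      ‖-s * (s - 1) * ((x : ℂ) - m) * (x : ℂ) ^ (-s - 1)‖ ≤
        ‖s‖ * ‖s - 1‖ * (m : ℝ) ^ (-s.re - 1) := by
    intro x hx
    have hx0 : 0 < x := lt_of_lt_of_le hm0 hx.1
    rw [norm_mul, norm_mul, norm_mul, norm_neg, Complex.norm_cpow_eq_rpow_re_of_pos hx0]
    have e1 : ‖(x : ℂ) - m‖ ≤ 1 := by
      have : (x : ℂ) - m = ((x - m : ℝ) : ℂ) := by push_cast; ring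
      rw [this, Complex.norm_real, Real.norm_eq_abs, abs_le]
      constructor <;> linarith [hx.1, hx.2]
    have e2 : x ^ (-s - 1).re ≤ (m : ℝ) ^ (-s.re - 1) := by
      simp only [Complex.sub_re, Complex.neg_re, Complex.one_re]
      exact Real.rpow_le_rpow_of_nonpos hm0 hx.1 (by linarith)
    calc ‖s‖ * ‖s - 1‖ * ‖(x : ℂ) - m‖ * x ^ (-s - 1).re
        ≤ ‖s‖ * ‖s - 1‖ * 1 * (m : ℝ) ^ (-s.re - 1) := by gcongr
      _ = _ := by ring
  have := norm_image_sub_le_of_norm_deriv_le_segment' hd hb (m + 1) (by constructor <;> linarith)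
  have e : φ (m + 1) - φ m = zq m s := by
    simp only [φ, zq]; push_cast; ring
  rw [e] at this
  simpa using this

lemma zq_diff (m : ℕ) (hm : 1 ≤ m) : Differentiable ℂ (zq m) := by
  have h1 : (m : ℂ) + 1 ≠ 0 := by exact_mod_cast Nat.succ_ne_zero m
  have h2 : (m : ℂ) ≠ 0 := by exact_mod_cast (by omega : m ≠ 0)
  intro s
  unfold zq
  refine DifferentiableAt.sub (DifferentiableAt.add (DifferentiableAt.mul (by fun_prop) ?_) ?_) ?_
  · exact DifferentiableAt.const_cpow (by fun_prop) (Or.inl h1)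
  · exact DifferentiableAt.const_cpow (by fun_prop) (Or.inl h1)
  · exact DifferentiableAt.const_cpow (by fun_prop) (Or.inl h2)

noncomputable def zfin (N : ℕ) (s : ℂ) : ℂ :=
  (s - 1) * ∑ n ∈ Finset.range N, ((n : ℂ) + 1) ^ (-s) + (N : ℂ) ^ (1 - s)

lemma zfin_diff (N : ℕ) (hN : 1 ≤ N) : Differentiable ℂ (zfin N) := by
  have h2 : (N : ℂ) ≠ 0 := by exact_mod_cast (by omega : N ≠ 0)
  intro s
  unfold zfin
  refine DifferentiableAt.add (DifferentiableAt.mul (by fun_prop) ?_) ?_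
  · refine DifferentiableAt.fun_sum fun n _ => ?_
    exact DifferentiableAt.const_cpow (by fun_prop) (Or.inl (by exact_mod_cast Nat.succ_ne_zero n))
  · exact DifferentiableAt.const_cpow (by fun_prop) (Or.inl h2)

lemma zfin_tele (N K : ℕ) (s : ℂ) :
    zfin N s + ∑ k ∈ Finset.range K, zq (N + k) s = zfin (N + K) s := by
  induction K with
  | zero => simp
  | succ K ih =>
    rw [Finset.sum_range_succ, ← add_assoc, ih, ← add_assoc N K 1]
    unfold zfin zq
    rw [Finset.sum_range_succ]
    push_cast
    ring

lemma summ_zq_aux (N : ℕ) (hN : 1 ≤ N) (r : ℝ) (hr : 0 < r) :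
    Summable fun k : ℕ => ((N + k : ℕ) : ℝ) ^ (-r - 1) := by
  have h : Summable fun k : ℕ => (k : ℝ) ^ (-r - 1) :=
    Real.summable_nat_rpow.mpr (by linarith)
  have := (summable_nat_add_iff N).mpr h
  refine this.congr fun k => ?_
  rw [add_comm]

lemma zq_summ (N : ℕ) (hN : 1 ≤ N) (s : ℂ) (hs : 0 < s.re) :
    Summable fun k : ℕ => zq (N + k) s :=
  Summable.of_norm_bounded ((summ_zq_aux N hN s.re hs).mul_left (‖s‖ * ‖s - 1‖))
    fun k => zq_bound (N + k) (by omega) s hs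

lemma Z_eq_re_gt_one (N : ℕ) (hN : 1 ≤ N) (s : ℂ) (hs : 1 < s.re) :
    riemannZeta₁ s = zfin N s + ∑' k, zq (N + k) s := by
  have hs1 : s ≠ 1 := by rintro rfl; simp at hs
  have h1 : riemannZeta₁ s = (s - 1) * riemannZeta s := by
    rw [riemannZeta_eq_inv_sub_mul hs1]
    field_simp [sub_ne_zero.mpr hs1]
  have h2 := (zq_summ N hN s (by linarith)).hasSum.tendsto_sum_nat
  have h3 := h2.const_add (zfin N s)
  simp_rw [zfin_tele] at h3
  refine tendsto_nhds_unique ?_ h3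
  have hz : Tendsto (fun M : ℕ => ∑ n ∈ Finset.range M, ((n : ℂ) + 1) ^ (-s)) atTop
      (nhds (riemannZeta s)) := by
    rw [zeta_eq_tsum_one_div_nat_add_one_cpow hs]
    have hsum : Summable fun n : ℕ => 1 / ((n : ℂ) + 1) ^ s := by
      have := (summable_nat_add_iff 1).mpr (Complex.summable_one_div_nat_cpow.mpr hs)
      simpa using this
    have := hsum.hasSum.tendsto_sum_nat
    refine this.congr fun M => ?_
    refine Finset.sum_congr rfl fun n _ => ?_
    rw [Complex.cpow_neg, one_div]
  have hp : Tendsto (fun M : ℕ => (M : ℂ) ^ (1 - s)) atTop (nhds 0) := by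
    rw [tendsto_zero_iff_norm_tendsto_zero]
    have h := (tendsto_rpow_neg_atTop (y := s.re - 1) (by linarith)).comp
      tendsto_natCast_atTop_atTop
    refine h.congr' ?_
    filter_upwards [eventually_gt_atTop 0] with M hM
    have hM' : (0:ℝ) < M := by exact_mod_cast hM
    have := Complex.norm_cpow_eq_rpow_re_of_pos hM' (1 - s)
    simp only [Complex.ofReal_natCast] at this
    rw [this]
    simp
  have hlim : Tendsto (fun M : ℕ => zfin M s) atTop (nhds (riemannZeta₁ s)) := by
    have := (hz.const_mul (s - 1)).add hp
    rw [h1]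
    simpa [zfin] using this
  have := hlim.comp (tendsto_add_atTop_nat N)
  refine this.congr fun K => ?_
  simp [add_comm]

lemma Z_eq (N : ℕ) (hN : 1 ≤ N) (s : ℂ) (hs : 1 / 2 < s.re) :
    riemannZeta₁ s = zfin N s + ∑' k, zq (N + k) s := by
  set M : ℝ := ‖s‖ + 3 with hM
  let U : Set ℂ := {z | 1 / 2 < z.re} ∩ Metric.ball 0 M
  have hUo : IsOpen U := (isOpen_lt continuous_const Complex.continuous_re).inter Metric.isOpen_ball
  have hUc : Convex ℝ U := (convex_halfSpace_re_gt _).inter (convex_ball _ _)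
  have hd : DifferentiableOn ℂ (fun z => ∑' k, zq (N + k) z) U := by
    refine Complex.differentiableOn_tsum_of_summable_norm
      ((summ_zq_aux N hN (1/2) (by norm_num)).mul_left (M * (M + 1)))
      (fun k => (zq_diff (N + k) (by omega)).differentiableOn) hUo ?_
    intro k z hz
    have hz1 : 1 / 2 < z.re := hz.1
    have hz2 : ‖z‖ < M := by simpa using hz.2
    refine (zq_bound (N + k) (by omega) z (by linarith)).trans ?_
    have h1 : ‖z - 1‖ ≤ M + 1 := (norm_sub_le _ _).trans (by simp; linarith)
    have h2 : (1:ℝ) ≤ ((N + k : ℕ) : ℝ) := by exact_mod_cast (by omega)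
    gcongr
  have hg : AnalyticOnNhd ℂ (fun z => zfin N z + ∑' k, zq (N + k) z) U :=
    ((zfin_diff N hN).differentiableOn.add hd).analyticOnNhd hUo
  have hf : AnalyticOnNhd ℂ riemannZeta₁ U :=
    differentiable_riemannZeta₁.differentiableOn.analyticOnNhd hUo
  have h2U : (2 : ℂ) ∈ U := by
    refine ⟨by simp; norm_num, ?_⟩
    simp [hM]; linarith [norm_nonneg s]
  have hsU : s ∈ U := ⟨hs, by simp [hM]⟩
  refine hf.eqOn_of_preconnected_of_eventuallyEq hg hUc.isPreconnected h2U ?_ hsU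
  have : {z : ℂ | 1 < z.re} ∈ nhds (2 : ℂ) :=
    (isOpen_lt continuous_const Complex.continuous_re).mem_nhds (by simp)
  filter_upwards [this] with z hz
  exact Z_eq_re_gt_one N hN z hz

noncomputable def TT (s : ℂ) : ℝ := 1 + |s.im|

lemma TT_ge (s : ℂ) : 1 ≤ TT s := by unfold TT; linarith [abs_nonneg s.im]

lemma Z_upper (a : ℝ) (ha : 0 < a) (ha' : a ≤ 1 / 4) :
    ∃ C > 0, ∀ s : ℂ, 1 - a ≤ s.re → s.re ≤ 3 → ‖riemannZeta₁ s‖ ≤ C * TT s ^ (1 + 2 * a) := by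
  have hsum := summ_zq_aux 1 le_rfl a ha
  set K : ℝ := ∑' k : ℕ, ((1 + k : ℕ) : ℝ) ^ (-a - 1) with hK
  have hK0 : 0 ≤ K := tsum_nonneg fun k => by positivity
  refine ⟨10 * K + 2, by positivity, fun s hs1 hs3 => ?_⟩
  set T := TT s with hT
  have hT1 : 1 ≤ T := TT_ge s
  have hT0 : 0 < T := by linarith
  obtain ⟨N, hN1, hN2⟩ : ∃ N : ℕ, T ≤ N ∧ (N : ℝ) ≤ 2 * T :=
    ⟨⌈T⌉₊, Nat.le_ceil _, by linarith [Nat.ceil_lt_add_one hT0.le]⟩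
  have hN0 : (1:ℝ) ≤ N := by linarith
  have hN : 1 ≤ N := by exact_mod_cast hN0
  have hs_norm : ‖s‖ ≤ 3 * T := by
    refine (Complex.norm_le_abs_re_add_abs_im s).trans ?_
    rw [abs_of_nonneg (by linarith)]
    rw [hT]; unfold TT; linarith [abs_nonneg s.im]
  have hs1_norm : ‖s - 1‖ ≤ 2 * T := by
    refine (Complex.norm_le_abs_re_add_abs_im (s - 1)).trans ?_
    have : |(s - 1).re| ≤ 2 := by
      rw [Complex.sub_re, Complex.one_re, abs_le]; constructor <;> linarith
    have h2 : (s - 1).im = s.im := by simp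
    rw [h2, hT]; unfold TT; linarith [abs_nonneg s.im]
  have hNp : (N : ℝ) ^ (2 * a) ≤ 2 * T ^ (2 * a) := by
    calc (N : ℝ) ^ (2 * a) ≤ (2 * T) ^ (2 * a) := by gcongr
      _ = 2 ^ (2 * a) * T ^ (2 * a) := Real.mul_rpow (by norm_num) hT0.le
      _ ≤ 2 ^ (1 : ℝ) * T ^ (2 * a) := by
          gcongr
          · norm_num
          · linarith
      _ = _ := by rw [Real.rpow_one]
  -- first term
  have t1 : ‖∑ n ∈ Finset.range N, ((n : ℂ) + 1) ^ (-s)‖ ≤ K * (N : ℝ) ^ (2 * a) := by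
    calc ‖∑ n ∈ Finset.range N, ((n : ℂ) + 1) ^ (-s)‖
        ≤ ∑ n ∈ Finset.range N, ‖((n : ℂ) + 1) ^ (-s)‖ := norm_sum_le _ _
      _ ≤ ∑ n ∈ Finset.range N, ((1 + n : ℕ) : ℝ) ^ (-a - 1) * (N : ℝ) ^ (2 * a) := by
          refine Finset.sum_le_sum fun n hn => ?_
          have hn' : n < N := Finset.mem_range.mp hn
          have h0 : (0:ℝ) < (1 + n : ℕ) := by positivity
          have h1 : (1:ℝ) ≤ (1 + n : ℕ) := by push_cast; linarith [n.cast_nonneg (α := ℝ)]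
          have e := Complex.norm_cpow_eq_rpow_re_of_pos h0 (-s)
          have e' : (((1 + n : ℕ) : ℝ) : ℂ) = (n : ℂ) + 1 := by push_cast; ring
          rw [e'] at e
          rw [e]
          have hle : ((1 + n : ℕ) : ℝ) ≤ N := by exact_mod_cast (by omega)
          calc ((1 + n : ℕ) : ℝ) ^ (-s).re ≤ ((1 + n : ℕ) : ℝ) ^ ((-a - 1) + 2 * a) := by
                refine Real.rpow_le_rpow_of_exponent_le h1 ?_
                simp only [Complex.neg_re]; linarith
            _ = ((1 + n : ℕ) : ℝ) ^ (-a - 1) * ((1 + n : ℕ) : ℝ) ^ (2 * a) := Real.rpow_add h0 _ _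
            _ ≤ _ := by gcongr
      _ = (∑ n ∈ Finset.range N, ((1 + n : ℕ) : ℝ) ^ (-a - 1)) * (N : ℝ) ^ (2 * a) := by
          rw [Finset.sum_mul]
      _ ≤ K * (N : ℝ) ^ (2 * a) := by
          gcongr
          exact hsum.sum_le_tsum _ fun k _ => by positivity
  have t2 : ‖(N : ℂ) ^ (1 - s)‖ ≤ (N : ℝ) ^ (2 * a) := by
    have e := Complex.norm_cpow_eq_rpow_re_of_pos (x := (N:ℝ)) (by linarith) (1 - s)
    simp only [Complex.ofReal_natCast] at e
    rw [e]
    refine Real.rpow_le_rpow_of_exponent_le hN0 ?_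
    simp only [Complex.sub_re, Complex.one_re]; linarith
  have t3 : ‖∑' k, zq (N + k) s‖ ≤ (3 * T) * (2 * T) * (T ^ (2 * a - 1) * K) := by
    rw [hK, ← tsum_mul_left, ← tsum_mul_left]
    refine tsum_of_norm_bounded ((hsum.mul_left _).mul_left _).hasSum fun k => ?_
    refine (zq_bound (N + k) (by omega) s (by linarith)).trans ?_
    have h0 : (0:ℝ) < (N + k : ℕ) := by exact_mod_cast (by omega)
    have h1 : (1:ℝ) ≤ (N + k : ℕ) := by exact_mod_cast (by omega)
    have h2 : T ≤ (N + k : ℕ) := by push_cast; linarith [k.cast_nonneg (α := ℝ)]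
    have h3 : ((1 + k : ℕ) : ℝ) ≤ (N + k : ℕ) := by exact_mod_cast (by omega)
    have h4 : (0:ℝ) < (1 + k : ℕ) := by positivity
    have : ((N + k : ℕ) : ℝ) ^ (-s.re - 1) ≤ T ^ (2 * a - 1) * ((1 + k : ℕ) : ℝ) ^ (-a - 1) := by
      calc ((N + k : ℕ) : ℝ) ^ (-s.re - 1) ≤ ((N + k : ℕ) : ℝ) ^ ((2 * a - 1) + (-a - 1)) :=
            Real.rpow_le_rpow_of_exponent_le h1 (by linarith)
        _ = ((N + k : ℕ) : ℝ) ^ (2 * a - 1) * ((N + k : ℕ) : ℝ) ^ (-a - 1) := Real.rpow_add h0 _ _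
        _ ≤ _ := mul_le_mul (Real.rpow_le_rpow_of_nonpos hT0 h2 (by linarith))
            (Real.rpow_le_rpow_of_nonpos h4 h3 (by linarith)) (by positivity) (by positivity)
    gcongr
  rw [Z_eq N hN s (by linarith)]
  have eT1 : T ^ (1 + 2 * a) = T * T ^ (2 * a) := by rw [Real.rpow_add hT0, Real.rpow_one]
  have eT2 : T * T * T ^ (2 * a - 1) = T ^ (1 + 2 * a) := by
    rw [eT1, Real.rpow_sub hT0, Real.rpow_one]; field_simp
  have hP : T ^ (2 * a) ≤ T ^ (1 + 2 * a) := by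
    rw [eT1]; exact le_mul_of_one_le_left (by positivity) hT1
  unfold zfin
  calc ‖(s - 1) * ∑ n ∈ Finset.range N, ((n : ℂ) + 1) ^ (-s) + (N : ℂ) ^ (1 - s)
        + ∑' k, zq (N + k) s‖
      ≤ ‖s - 1‖ * ‖∑ n ∈ Finset.range N, ((n : ℂ) + 1) ^ (-s)‖ + ‖(N : ℂ) ^ (1 - s)‖
        + ‖∑' k, zq (N + k) s‖ := by
        refine (norm_add_le _ _).trans (add_le_add_left ((norm_add_le _ _).trans ?_) _)
        rw [norm_mul]
    _ ≤ (2 * T) * (K * (2 * T ^ (2 * a))) + 2 * T ^ (2 * a)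
        + (3 * T) * (2 * T) * (T ^ (2 * a - 1) * K) := by
        gcongr
        · exact t1.trans (by gcongr)
        · exact t2.trans hNp
    _ = 4 * K * (T * T ^ (2 * a)) + 2 * T ^ (2 * a) + 6 * K * (T * T * T ^ (2 * a - 1)) := by ring
    _ ≤ 4 * K * T ^ (1 + 2 * a) + 2 * T ^ (1 + 2 * a) + 6 * K * T ^ (1 + 2 * a) := by
        rw [eT2, ← eT1]; gcongr
    _ = _ := by ring

lemma TT_pow_le (a : ℝ) (ha : 0 < a) (ha' : a ≤ 1 / 4) (s z : ℂ) (h : TT z ≤ 2 * TT s) :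
    TT z ^ (1 + 2 * a) ≤ 4 * TT s ^ (1 + 2 * a) := by
  have h0 := TT_ge z
  have h1 := TT_ge s
  calc TT z ^ (1 + 2 * a) ≤ (2 * TT s) ^ (1 + 2 * a) := by gcongr
    _ = 2 ^ (1 + 2 * a) * TT s ^ (1 + 2 * a) := Real.mul_rpow (by norm_num) (by linarith)
    _ ≤ 2 ^ (2 : ℝ) * TT s ^ (1 + 2 * a) := by
        gcongr
        · norm_num
        · linarith
    _ = _ := by norm_num

lemma Z_deriv_upper (a : ℝ) (ha : 0 < a) (ha' : a ≤ 1 / 4) :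
    ∃ C > 0, ∀ j ≤ 3, ∀ s : ℂ, 1 ≤ s.re → s.re ≤ 2 →
      ‖iteratedDeriv j riemannZeta₁ s‖ ≤ C * TT s ^ (1 + 2 * a) := by
  obtain ⟨C, hC, h⟩ := Z_upper a ha ha'
  refine ⟨6 * (4 * C) / a ^ 3, by positivity, fun j hj s hs1 hs2 => ?_⟩
  have hT := TT_ge s
  have key := Complex.norm_iteratedDeriv_le_of_forall_mem_sphere_norm_le (c := s) (R := a)
    (C := 4 * C * TT s ^ (1 + 2 * a)) (f := riemannZeta₁) j ha
    differentiable_riemannZeta₁.diffContOnCl ?_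
  · refine key.trans ?_
    have hf : ((j.factorial : ℕ) : ℝ) ≤ 6 := by
      have : j.factorial ≤ (3).factorial := Nat.factorial_le hj
      exact_mod_cast this
    have hp : a ^ 3 ≤ a ^ j := pow_le_pow_of_le_one ha.le (by linarith) hj
    calc (j.factorial : ℝ) * (4 * C * TT s ^ (1 + 2 * a)) / a ^ j
        ≤ 6 * (4 * C * TT s ^ (1 + 2 * a)) / a ^ 3 := by gcongr
      _ = _ := by ring
  · intro z hz
    have hz' : ‖z - s‖ = a := by simpa [dist_eq_norm] using hz
    have h1 : |(z - s).re| ≤ a := hz' ▸ Complex.abs_re_le_norm _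
    have h2 : |(z - s).im| ≤ a := hz' ▸ Complex.abs_im_le_norm _
    rw [Complex.sub_re, abs_le] at h1
    rw [Complex.sub_im] at h2
    have hzT : TT z ≤ 2 * TT s := by
      have : |z.im| ≤ |s.im| + |z.im - s.im| := by
        have := abs_add_le s.im (z.im - s.im)
        simpa using this
      unfold TT at *; linarith
    refine (h z (by linarith) (by linarith)).trans ?_
    have := TT_pow_le a ha ha' s z hzT
    calc C * TT z ^ (1 + 2 * a) ≤ C * (4 * TT s ^ (1 + 2 * a)) := by gcongr
      _ = _ := by ring

lemma Z_of_ne {s : ℂ} (hs1 : s ≠ 1) : riemannZeta₁ s = (s - 1) * riemannZeta s := by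
  rw [riemannZeta_eq_inv_sub_mul hs1]
  field_simp [sub_ne_zero.mpr hs1]

lemma Z_ne_zero {s : ℂ} (hs : 1 ≤ s.re) : riemannZeta₁ s ≠ 0 := by
  by_cases h : s = 1
  · simp [h]
  · rw [Z_of_ne h]
    exact mul_ne_zero (sub_ne_zero.mpr h) (riemannZeta_ne_zero_of_one_le_re hs)

lemma zeta341 {x : ℝ} (hx : 0 < x) (y : ℝ) :
    1 ≤ ‖riemannZeta (1 + x)‖ ^ 3 * ‖riemannZeta (1 + x + Complex.I * y)‖ ^ 4 *
      ‖riemannZeta (1 + x + 2 * Complex.I * y)‖ := by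
  have := DirichletCharacter.norm_LFunction_product_ge_one (N := 1) 1 hx y
  simp only [DirichletCharacter.LFunctionTrivChar, DirichletCharacter.LFunction_modOne_eq] at this
  simpa using this

lemma Z_lower_aux (a : ℝ) (ha : 0 < a) (ha' : a ≤ 1 / 4) :
    ∃ c > 0, ∀ x : ℝ, 0 < x → x ≤ 1 → ∀ y : ℝ, 1 ≤ |y| →
      c * x ^ 3 * (1 + |y|) ^ (4 - 2 * a) ≤ ‖riemannZeta₁ (1 + x + Complex.I * y)‖ ^ 4 := by
  obtain ⟨C, hC, h⟩ := Z_upper a ha ha'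
  refine ⟨1 / (64 * C ^ 4), by positivity, fun x hx hx1 y hy => ?_⟩
  set T : ℝ := 1 + |y| with hT
  have hT1 : 1 ≤ T := by linarith
  have hT0 : 0 < T := by linarith
  have hy0 : y ≠ 0 := by rintro rfl; simp at hy; linarith
  set s0 : ℂ := 1 + x
  set s1 : ℂ := 1 + x + Complex.I * y
  set s2 : ℂ := 1 + x + 2 * Complex.I * y
  have n0 : s0 ≠ 1 := fun hh => by
    have := congrArg Complex.re hh; simp [s0] at this; linarith
  have n1 : s1 ≠ 1 := fun hh => by
    have := congrArg Complex.im hh; simp [s1] at this; exact hy0 this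
  have n2 : s2 ≠ 1 := fun hh => by
    have := congrArg Complex.im hh; simp [s2] at this; exact hy0 this
  have b0 : x * ‖riemannZeta s0‖ ≤ C := by
    have := h s0 (by simp [s0]; linarith) (by simp [s0]; linarith)
    rw [Z_of_ne n0, norm_mul] at this
    have e1 : ‖s0 - 1‖ = x := by simp [s0, abs_of_pos hx]
    have e2 : TT s0 = 1 := by simp [TT, s0]
    rw [e1, e2] at this
    simpa using this
  have b2 : ‖riemannZeta s2‖ ≤ 4 * C * T ^ (2 * a) := by
    have h1 := h s2 (by simp [s2]; linarith) (by simp [s2]; linarith)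
    have e2 : TT s2 = 1 + 2 * |y| := by simp [TT, s2, abs_mul]
    have hle := TT_pow_le a ha ha' s1 s2 (by rw [e2]; simp [TT, s1]; linarith)
    have e3 : TT s1 = T := by simp [TT, s1, hT]
    rw [e3] at hle
    have h2 : T ≤ ‖s2 - 1‖ := by
      have := Complex.abs_im_le_norm (s2 - 1)
      simp [s2, abs_mul] at this
      refine le_trans ?_ (by simpa [s2] using this)
      linarith
    rw [Z_of_ne n2, norm_mul] at h1
    have h3 : T * ‖riemannZeta s2‖ ≤ T * (4 * C * T ^ (2 * a)) := by
      calc T * ‖riemannZeta s2‖ ≤ ‖s2 - 1‖ * ‖riemannZeta s2‖ := by gcongr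
        _ ≤ C * TT s2 ^ (1 + 2 * a) := h1
        _ ≤ C * (4 * T ^ (1 + 2 * a)) := by gcongr
        _ = _ := by rw [Real.rpow_add hT0, Real.rpow_one]; ring
    exact le_of_mul_le_mul_left h3 hT0
  have b1 : T * ‖riemannZeta s1‖ ≤ 2 * ‖riemannZeta₁ s1‖ := by
    rw [Z_of_ne n1, norm_mul, ← mul_assoc]
    gcongr
    have := Complex.abs_im_le_norm (s1 - 1)
    have e : (s1 - 1).im = y := by simp [s1]
    rw [e] at this
    linarith
  have key := zeta341 hx y
  have hpow : T ^ (4 - 2 * a) * T ^ (2 * a) = T ^ 4 := by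
    rw [← Real.rpow_add hT0]; norm_num
  have p2 : 0 < T ^ (2 * a) := by positivity
  have main : x ^ 3 * T ^ 4 ≤ 64 * C ^ 4 * T ^ (2 * a) * ‖riemannZeta₁ s1‖ ^ 4 := by
    calc x ^ 3 * T ^ 4 = x ^ 3 * T ^ 4 * 1 := by ring
      _ ≤ x ^ 3 * T ^ 4 * (‖riemannZeta s0‖ ^ 3 * ‖riemannZeta s1‖ ^ 4 * ‖riemannZeta s2‖) := by
          gcongr
      _ = (x * ‖riemannZeta s0‖) ^ 3 * (T * ‖riemannZeta s1‖) ^ 4 * ‖riemannZeta s2‖ := by ring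
      _ ≤ C ^ 3 * (2 * ‖riemannZeta₁ s1‖) ^ 4 * (4 * C * T ^ (2 * a)) := by gcongr
      _ = _ := by ring
  rw [← hpow] at main
  have m2 : (x ^ 3 * T ^ (4 - 2 * a)) * T ^ (2 * a) ≤
      (64 * C ^ 4 * ‖riemannZeta₁ s1‖ ^ 4) * T ^ (2 * a) := by linarith
  have m3 := le_of_mul_le_mul_right m2 p2
  calc 1 / (64 * C ^ 4) * x ^ 3 * T ^ (4 - 2 * a)
      = 1 / (64 * C ^ 4) * (x ^ 3 * T ^ (4 - 2 * a)) := by ring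
    _ ≤ 1 / (64 * C ^ 4) * (64 * C ^ 4 * ‖riemannZeta₁ s1‖ ^ 4) := by gcongr
    _ = _ := by field_simp

lemma Z_lower_big (a : ℝ) (ha : 0 < a) (ha' : a ≤ 1 / 4) :
    ∃ c > 0, ∀ s : ℂ, 1 ≤ s.re → s.re ≤ 2 → 1 ≤ |s.im| →
      c * TT s ^ (1 - 8 * a) ≤ ‖riemannZeta₁ s‖ := by
  obtain ⟨c, hc, h⟩ := Z_lower_aux a ha ha'
  obtain ⟨C, hC, hd⟩ := Z_deriv_upper a ha ha'
  set κ : ℝ := min 1 (c / (16 * C ^ 4)) with hκ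
  have hκ0 : 0 < κ := by positivity
  have hκ1 : κ ≤ 1 := min_le_left _ _
  have hκ2 : 16 * C ^ 4 * κ ≤ c := by
    have : κ ≤ c / (16 * C ^ 4) := min_le_right _ _
    rw [le_div_iff₀ (by positivity)] at this
    linarith
  refine ⟨C * κ, by positivity, fun s hs1 hs2 hy => ?_⟩
  set T := TT s with hT
  have hT1 : 1 ≤ T := TT_ge s
  have hT0 : 0 < T := by linarith
  set x0 : ℝ := κ * T ^ (-(10 * a)) with hx0
  have hx0p : 0 < x0 := by positivity
  have hx01 : x0 ≤ 1 := by
    have : T ^ (-(10 * a)) ≤ 1 := Real.rpow_le_one_of_one_le_of_nonpos hT1 (by linarith)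
    calc x0 ≤ 1 * 1 := by rw [hx0]; gcongr
      _ = 1 := by ring
  have hb : ∀ x : ℝ, x0 ≤ x → x ≤ 1 →
      2 * C * κ * T ^ (1 - 8 * a) ≤ ‖riemannZeta₁ (1 + x + Complex.I * s.im)‖ := by
    intro x hx hx1
    have h1 := h x (by linarith) hx1 s.im hy
    have e : (1 + |s.im|) = T := rfl
    rw [e] at h1
    refine le_of_pow_le_pow_left₀ (n := 4) (by norm_num) (norm_nonneg _) (le_trans ?_ h1)
    have e1 : (T ^ (1 - 8 * a)) ^ 4 = T ^ (-(30 * a)) * T ^ (4 - 2 * a) := by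
      rw [← Real.rpow_natCast, ← Real.rpow_mul hT0.le, ← Real.rpow_add hT0]
      congr 1; push_cast; ring
    have e2 : x0 ^ 3 = κ ^ 3 * T ^ (-(30 * a)) := by
      rw [hx0, mul_pow, ← Real.rpow_natCast (T ^ (-(10 * a))), ← Real.rpow_mul hT0.le]
      congr 2; push_cast; ring
    calc (2 * C * κ * T ^ (1 - 8 * a)) ^ 4
        = (16 * C ^ 4 * κ) * (κ ^ 3 * T ^ (-(30 * a))) * T ^ (4 - 2 * a) := by
          rw [mul_pow, e1]; ring
      _ ≤ c * (κ ^ 3 * T ^ (-(30 * a))) * T ^ (4 - 2 * a) := by gcongr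
      _ = c * x0 ^ 3 * T ^ (4 - 2 * a) := by rw [e2]
      _ ≤ c * x ^ 3 * T ^ (4 - 2 * a) := by gcongr
  have hsf : s = 1 + ((s.re - 1 : ℝ) : ℂ) + Complex.I * s.im := by
    apply Complex.ext <;> simp
  have hpos : 0 ≤ C * κ * T ^ (1 - 8 * a) := by positivity
  by_cases hx : x0 ≤ s.re - 1
  · have := hb (s.re - 1) hx (by linarith)
    rw [← hsf] at this
    linarith
  · push Not at hx
    have h1 := hb x0 le_rfl hx01
    set z : ℂ := 1 + x0 + Complex.I * s.im with hz
    have hmv : ‖riemannZeta₁ z - riemannZeta₁ s‖ ≤ C * T ^ (1 + 2 * a) * ‖z - s‖ := by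
      let S : Set ℂ := {w | 1 ≤ w.re} ∩ {w | w.re ≤ 2} ∩ {w | w.im = s.im}
      have hS : Convex ℝ S := by
        refine ((convex_halfSpace_re_ge 1).inter (convex_halfSpace_re_le 2)).inter ?_
        exact convex_hyperplane Complex.imLm.isLinear s.im
      refine hS.norm_image_sub_le_of_norm_deriv_le (f := riemannZeta₁)
        (fun w _ => differentiable_riemannZeta₁ w) ?_ (x := s) (y := z) ?_ ?_
      · intro w hw
        have := hd 1 (by norm_num) w hw.1.1 hw.1.2
        rw [iteratedDeriv_one] at this
        have e : TT w = T := by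
          have : w.im = s.im := hw.2
          simp [hT, TT, this]
        rwa [e] at this
      · exact ⟨⟨hs1, hs2⟩, rfl⟩
      · refine ⟨⟨?_, ?_⟩, ?_⟩ <;> simp [hz] <;> linarith
    have hzs : ‖z - s‖ ≤ x0 := by
      have : z - s = ((x0 - (s.re - 1) : ℝ) : ℂ) := by
        apply Complex.ext <;> simp [hz]; ring
      rw [this, Complex.norm_real, Real.norm_eq_abs, abs_le]
      constructor <;> linarith
    have e3 : T ^ (1 + 2 * a) * T ^ (-(10 * a)) = T ^ (1 - 8 * a) := by
      rw [← Real.rpow_add hT0]; congr 1; ring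
    have h2 : ‖riemannZeta₁ z - riemannZeta₁ s‖ ≤ C * κ * T ^ (1 - 8 * a) := by
      calc _ ≤ C * T ^ (1 + 2 * a) * ‖z - s‖ := hmv
        _ ≤ C * T ^ (1 + 2 * a) * x0 := by gcongr
        _ = C * κ * (T ^ (1 + 2 * a) * T ^ (-(10 * a))) := by rw [hx0]; ring
        _ = _ := by rw [e3]
    have h3 := norm_sub_norm_le (riemannZeta₁ z) (riemannZeta₁ s)
    linarith

lemma Z_lower (a : ℝ) (ha : 0 < a) (ha' : a ≤ 1 / 8) :
    ∃ c > 0, ∀ s : ℂ, 1 ≤ s.re → s.re ≤ 2 →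
      c * TT s ^ (1 - 8 * a) ≤ ‖riemannZeta₁ s‖ := by
  obtain ⟨c, hc, h⟩ := Z_lower_big a ha (by linarith)
  have hcomp : IsCompact (Set.Icc (1:ℝ) 2 ×ℂ Set.Icc (-1:ℝ) 1) :=
    isCompact_Icc.reProdIm isCompact_Icc
  obtain ⟨z, hz, hmin⟩ := hcomp.exists_isMinOn ⟨1, by simp [Complex.mem_reProdIm]⟩
    (differentiable_riemannZeta₁.continuous.norm.continuousOn)
  have hzpos : 0 < ‖riemannZeta₁ z‖ := norm_pos_iff.mpr (Z_ne_zero hz.1.1)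
  refine ⟨min c (‖riemannZeta₁ z‖ / 2), by positivity, fun s hs1 hs2 => ?_⟩
  have hT1 : 1 ≤ TT s := TT_ge s
  by_cases hy : 1 ≤ |s.im|
  · refine le_trans ?_ (h s hs1 hs2 hy)
    gcongr
    exact min_le_left _ _
  · push Not at hy
    have h1 : TT s ^ (1 - 8 * a) ≤ 2 := by
      calc TT s ^ (1 - 8 * a) ≤ TT s ^ (1 : ℝ) :=
            Real.rpow_le_rpow_of_exponent_le hT1 (by linarith)
        _ ≤ 2 := by rw [Real.rpow_one]; unfold TT; linarith
    have h2 : ‖riemannZeta₁ z‖ ≤ ‖riemannZeta₁ s‖ :=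
      hmin (show s ∈ _ from ⟨⟨hs1, hs2⟩, by
        rw [abs_lt] at hy; exact ⟨hy.1.le, hy.2.le⟩⟩)
    calc _ ≤ ‖riemannZeta₁ z‖ / 2 * 2 := by
          gcongr
          exact min_le_right _ _
      _ = ‖riemannZeta₁ z‖ := by ring
      _ ≤ _ := h2

noncomputable def Zr (j : ℕ) (s : ℂ) : ℂ := iteratedDeriv j riemannZeta₁ s / riemannZeta₁ s

noncomputable def f0 (s : ℂ) : ℂ := Zr 1 s
noncomputable def f1 (s : ℂ) : ℂ := Zr 2 s - Zr 1 s * Zr 1 s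
noncomputable def f2 (s : ℂ) : ℂ :=
  (Zr 3 s - Zr 2 s * Zr 1 s) - (f1 s * Zr 1 s + Zr 1 s * f1 s)
noncomputable def qq (s : ℂ) : ℂ := s⁻¹ * (s + 1)⁻¹
noncomputable def q1 (s : ℂ) : ℂ := - (qq s * (s⁻¹ + (s + 1)⁻¹))
noncomputable def q2 (s : ℂ) : ℂ :=
  -(q1 s * (s⁻¹ + (s + 1)⁻¹) + qq s * (-(s⁻¹ * s⁻¹) - (s + 1)⁻¹ * (s + 1)⁻¹))
noncomputable def F0 (s : ℂ) : ℂ := f0 s * qq s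
noncomputable def F1 (s : ℂ) : ℂ := f1 s * qq s + f0 s * q1 s
noncomputable def F2 (s : ℂ) : ℂ := (f2 s * qq s + f1 s * q1 s) + (f1 s * q1 s + f0 s * q2 s)

lemma hasDerivAt_Zr (j : ℕ) {s : ℂ} (hs : 1 ≤ s.re) :
    HasDerivAt (Zr j) (Zr (j + 1) s - Zr j s * Zr 1 s) s := by
  have hZ := Z_ne_zero hs
  have hcd : ContDiff ℂ ⊤ riemannZeta₁ := differentiable_riemannZeta₁.contDiff
  have h1 : HasDerivAt (iteratedDeriv j riemannZeta₁) (iteratedDeriv (j + 1) riemannZeta₁ s) s := by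
    rw [iteratedDeriv_succ]
    refine DifferentiableAt.hasDerivAt ?_
    exact (hcd.differentiable_iteratedDeriv j (by exact_mod_cast WithTop.coe_lt_top _)) s
  have h0 : HasDerivAt riemannZeta₁ (iteratedDeriv 1 riemannZeta₁ s) s := by
    rw [iteratedDeriv_one]
    exact (differentiable_riemannZeta₁ s).hasDerivAt
  refine (h1.div h0 hZ).congr_deriv ?_
  unfold Zr
  field_simp

lemma hasDerivAt_f0 {s : ℂ} (hs : 1 ≤ s.re) : HasDerivAt f0 (f1 s) s := hasDerivAt_Zr 1 hs

lemma hasDerivAt_f1 {s : ℂ} (hs : 1 ≤ s.re) : HasDerivAt f1 (f2 s) s :=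
  (hasDerivAt_Zr 2 hs).sub ((hasDerivAt_Zr 1 hs).mul (hasDerivAt_Zr 1 hs))

lemma hasDerivAt_invs {s : ℂ} (hs : 1 ≤ s.re) :
    HasDerivAt (fun z : ℂ => z⁻¹) (-(s⁻¹ * s⁻¹)) s ∧
    HasDerivAt (fun z : ℂ => (z + 1)⁻¹) (-((s + 1)⁻¹ * (s + 1)⁻¹)) s := by
  have h0 : s ≠ 0 := by rintro rfl; simp at hs; linarith
  have h1 : s + 1 ≠ 0 := by
    intro h
    have := congrArg Complex.re h
    simp at this; linarith
  constructor
  · refine (hasDerivAt_inv h0).congr_deriv ?_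
    field_simp
  · refine (((hasDerivAt_id s).add_const 1).inv h1).congr_deriv ?_
    simp; field_simp

lemma hasDerivAt_qq {s : ℂ} (hs : 1 ≤ s.re) : HasDerivAt qq (q1 s) s := by
  obtain ⟨h1, h2⟩ := hasDerivAt_invs hs
  refine (h1.mul h2).congr_deriv ?_
  unfold q1 qq; ring

lemma hasDerivAt_q1 {s : ℂ} (hs : 1 ≤ s.re) : HasDerivAt q1 (q2 s) s := by
  obtain ⟨h1, h2⟩ := hasDerivAt_invs hs
  refine ((hasDerivAt_qq hs).mul (h1.add h2)).neg.congr_deriv ?_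
  unfold q2
  simp only [Pi.add_apply]; ring

lemma hasDerivAt_F0 {s : ℂ} (hs : 1 ≤ s.re) : HasDerivAt F0 (F1 s) s :=
  (hasDerivAt_f0 hs).mul (hasDerivAt_qq hs)

lemma hasDerivAt_F1 {s : ℂ} (hs : 1 ≤ s.re) : HasDerivAt F1 (F2 s) s :=
  ((hasDerivAt_f1 hs).mul (hasDerivAt_qq hs)).add ((hasDerivAt_f0 hs).mul (hasDerivAt_q1 hs))

lemma continuousAt_F2 {s : ℂ} (hs : 1 ≤ s.re) : ContinuousAt F2 s := by
  have a1 := (hasDerivAt_Zr 1 hs).continuousAt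
  have a2 := (hasDerivAt_Zr 2 hs).continuousAt
  have a3 := (hasDerivAt_Zr 3 hs).continuousAt
  have b0 := (hasDerivAt_f0 hs).continuousAt
  have b1 := (hasDerivAt_f1 hs).continuousAt
  have c0 := (hasDerivAt_qq hs).continuousAt
  have c1 := (hasDerivAt_q1 hs).continuousAt
  have d0 := (hasDerivAt_invs hs).1.continuousAt
  have d1 := (hasDerivAt_invs hs).2.continuousAt
  have b2 : ContinuousAt f2 s := (a3.sub (a2.mul a1)).sub ((b1.mul a1).add (a1.mul b1))
  have c2 : ContinuousAt q2 s :=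
    ((c1.mul (d0.add d1)).add (c0.mul ((d0.mul d0).neg.sub (d1.mul d1)))).neg
  exact ((b2.mul c0).add (b1.mul c1)).add ((b1.mul c1).add (b0.mul c2))

lemma F_bounds : ∃ C > 0, ∀ s : ℂ, 1 ≤ s.re → s.re ≤ 2 →
    ‖F0 s‖ ≤ C * TT s ^ (-(3/2) : ℝ) ∧ ‖F1 s‖ ≤ C * TT s ^ (-(3/2) : ℝ) ∧
    ‖F2 s‖ ≤ C * TT s ^ (-(3/2) : ℝ) := by
  obtain ⟨c, hc, hl⟩ := Z_lower (1/60) (by norm_num) (by norm_num)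
  obtain ⟨C, hC, hu⟩ := Z_deriv_upper (1/60) (by norm_num) (by norm_num)
  set D : ℝ := max 1 (C / c) with hD
  have hD1 : 1 ≤ D := le_max_left _ _
  refine ⟨80 * D ^ 3, by positivity, fun s hs1 hs2 => ?_⟩
  set T := TT s with hT
  have hT1 : 1 ≤ T := TT_ge s
  have hT0 : 0 < T := by linarith
  set R : ℝ := D * T ^ (1/6 : ℝ) with hR
  have hR1 : 1 ≤ R := by
    have : 1 ≤ T ^ (1/6 : ℝ) := Real.one_le_rpow hT1 (by norm_num)
    calc (1:ℝ) = 1 * 1 := by ring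
      _ ≤ R := by rw [hR]; gcongr
  have hZr : ∀ j ≤ 3, ‖Zr j s‖ ≤ R := by
    intro j hj
    have h1 := hu j hj s hs1 hs2
    have h2 := hl s hs1 hs2
    have hpos : 0 < c * T ^ (1 - 8 * (1/60) : ℝ) := by positivity
    unfold Zr
    rw [norm_div, div_le_iff₀ (lt_of_lt_of_le hpos h2)]
    refine h1.trans ?_
    have e : T ^ (1 + 2 * (1/60) : ℝ) = T ^ (1/6 : ℝ) * T ^ (1 - 8 * (1/60) : ℝ) := by
      rw [← Real.rpow_add hT0]; norm_num
    calc C * T ^ (1 + 2 * (1/60) : ℝ) = (C / c) * T ^ (1/6 : ℝ) * (c * T ^ (1 - 8 * (1/60) : ℝ)) := by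
          rw [e]; field_simp
      _ ≤ D * T ^ (1/6 : ℝ) * (c * T ^ (1 - 8 * (1/60) : ℝ)) := by
          gcongr; exact le_max_right _ _
      _ ≤ R * ‖riemannZeta₁ s‖ := by rw [hR]; gcongr
  have r1 := hZr 1 (by norm_num)
  have r2 := hZr 2 (by norm_num)
  have r3 := hZr 3 (by norm_num)
  have hR2 : R ≤ R ^ 2 := by nlinarith
  have hR3 : R ^ 2 ≤ R ^ 3 := by nlinarith
  have m0 : ‖f0 s‖ ≤ R := r1
  have m1 : ‖f1 s‖ ≤ 2 * R ^ 2 := by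
    calc ‖f1 s‖ ≤ ‖Zr 2 s‖ + ‖Zr 1 s‖ * ‖Zr 1 s‖ := by
          unfold f1; exact (norm_sub_le _ _).trans (by rw [norm_mul])
      _ ≤ R + R * R := by gcongr
      _ ≤ _ := by nlinarith
  have m2 : ‖f2 s‖ ≤ 6 * R ^ 3 := by
    calc ‖f2 s‖ ≤ (‖Zr 3 s‖ + ‖Zr 2 s‖ * ‖Zr 1 s‖) + (‖f1 s‖ * ‖Zr 1 s‖ + ‖Zr 1 s‖ * ‖f1 s‖) := by
          unfold f2
          simp only [← norm_mul]
          exact (norm_sub_le _ _).trans (add_le_add (norm_sub_le _ _) (norm_add_le _ _))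
      _ ≤ (R + R * R) + ((2 * R ^ 2) * R + R * (2 * R ^ 2)) := by gcongr
      _ ≤ _ := by nlinarith
  -- q bounds
  have hsn1 : 1 ≤ ‖s‖ := hs1.trans ((le_abs_self _).trans (Complex.abs_re_le_norm s))
  have hsn2 : T / 2 ≤ ‖s‖ := by
    have := Complex.abs_im_le_norm s
    rw [hT]; unfold TT; linarith
  have hsp1 : 1 ≤ ‖s + 1‖ := by
    have := (le_abs_self _).trans (Complex.abs_re_le_norm (s + 1))
    simp at this; linarith
  have hsp2 : T / 2 ≤ ‖s + 1‖ := by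
    have := Complex.abs_im_le_norm (s + 1)
    simp at this
    rw [hT]; unfold TT; linarith
  have i1 : ‖s⁻¹‖ ≤ 1 := by rw [norm_inv]; exact inv_le_one_of_one_le₀ hsn1
  have i2 : ‖(s + 1)⁻¹‖ ≤ 1 := by rw [norm_inv]; exact inv_le_one_of_one_le₀ hsp1
  set Q : ℝ := 4 * T ^ (-2 : ℝ) with hQ
  have hQ0 : 0 < Q := by positivity
  have k0 : ‖qq s‖ ≤ Q := by
    unfold qq
    rw [norm_mul, norm_inv, norm_inv]
    calc ‖s‖⁻¹ * ‖s + 1‖⁻¹ ≤ (T / 2)⁻¹ * (T / 2)⁻¹ := by gcongr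
      _ = Q := by
        rw [hQ, Real.rpow_neg hT0.le]
        norm_num; field_simp; norm_num
  have k1 : ‖q1 s‖ ≤ 2 * Q := by
    calc ‖q1 s‖ ≤ ‖qq s‖ * (‖s⁻¹‖ + ‖(s + 1)⁻¹‖) := by
          unfold q1; rw [norm_neg, norm_mul]; gcongr; exact norm_add_le _ _
      _ ≤ Q * (1 + 1) := by gcongr
      _ = _ := by ring
  have k2 : ‖q2 s‖ ≤ 6 * Q := by
    calc ‖q2 s‖ ≤ ‖q1 s‖ * (‖s⁻¹‖ + ‖(s + 1)⁻¹‖)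
          + ‖qq s‖ * (‖s⁻¹‖ * ‖s⁻¹‖ + ‖(s + 1)⁻¹‖ * ‖(s + 1)⁻¹‖) := by
          unfold q2; rw [norm_neg]
          refine (norm_add_le _ _).trans ?_
          rw [norm_mul, norm_mul (qq s)]
          gcongr
          · exact norm_add_le _ _
          · refine (norm_sub_le _ _).trans ?_
            rw [norm_neg, norm_mul, norm_mul]
      _ ≤ 2 * Q * (1 + 1) + Q * (1 * 1 + 1 * 1) := by gcongr
      _ = _ := by ring
  have hfin : 20 * R ^ 3 * Q = 80 * D ^ 3 * T ^ (-(3/2) : ℝ) := by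
    have e1 : (T ^ (1/6 : ℝ)) ^ 3 * T ^ (-2 : ℝ) = T ^ (-(3/2) : ℝ) := by
      rw [← Real.rpow_natCast, ← Real.rpow_mul hT0.le, ← Real.rpow_add hT0]; norm_num
    rw [hR, hQ, ← e1]; ring
  rw [← hfin]
  refine ⟨?_, ?_, ?_⟩
  · calc ‖F0 s‖ ≤ R * Q := by unfold F0; rw [norm_mul]; gcongr
      _ ≤ R ^ 3 * Q := by gcongr; linarith
      _ ≤ _ := by nlinarith [mul_pos (pow_pos (by linarith : 0 < R) 3) hQ0]
  · calc ‖F1 s‖ ≤ (2 * R ^ 2) * Q + R * (2 * Q) := by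
          unfold F1; refine (norm_add_le _ _).trans ?_; rw [norm_mul, norm_mul]; gcongr
      _ ≤ (2 * R ^ 3) * Q + R ^ 3 * (2 * Q) := by gcongr; linarith
      _ ≤ _ := by nlinarith [mul_pos (pow_pos (by linarith : 0 < R) 3) hQ0]
  · calc ‖F2 s‖ ≤ ((6 * R ^ 3) * Q + (2 * R ^ 2) * (2 * Q)) + ((2 * R ^ 2) * (2 * Q) + R * (6 * Q)) := by
          unfold F2
          refine (norm_add_le _ _).trans (add_le_add ((norm_add_le _ _).trans ?_)
            ((norm_add_le _ _).trans ?_)) <;> rw [norm_mul, norm_mul] <;> gcongr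
      _ ≤ ((6 * R ^ 3) * Q + (2 * R ^ 3) * (2 * Q)) + ((2 * R ^ 3) * (2 * Q) + R ^ 3 * (6 * Q)) := by
          gcongr; linarith
      _ = _ := by ring

open MeasureTheory in
lemma lapB {c : ℝ} (hc : 0 ≤ c) {s : ℂ} (hs : 0 < s.re) :
    IntegrableOn (fun v : ℝ => ((max (rexp v - rexp c) 0 : ℝ) : ℂ) * Complex.exp (-(s + 1) * v)) (Set.Ioi 0) ∧
    ∫ v in Set.Ioi (0:ℝ), ((max (rexp v - rexp c) 0 : ℝ) : ℂ) * Complex.exp (-(s + 1) * v)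
      = Complex.exp (-s * c) * qq s := by
  have hs0 : s ≠ 0 := by rintro rfl; simp at hs
  have hs1 : s + 1 ≠ 0 := by
    intro h
    have := congrArg Complex.re h
    simp at this; linarith
  have hsub : Set.Ioi c ⊆ Set.Ioi (0:ℝ) := Set.Ioi_subset_Ioi hc
  have e0 : ∀ v : ℝ, v ∈ Set.Ioi (0:ℝ) \ Set.Ioi c → ((max (rexp v - rexp c) 0 : ℝ) : ℂ) * Complex.exp (-(s + 1) * v) = 0 := by
    intro v hv
    have : v ≤ c := by simpa using hv.2
    have : rexp v ≤ rexp c := Real.exp_le_exp.2 this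
    rw [max_eq_right (by linarith)]; simp
  have e1 : Set.EqOn (fun v : ℝ => ((max (rexp v - rexp c) 0 : ℝ) : ℂ) * Complex.exp (-(s + 1) * v))
      (fun v : ℝ => Complex.exp ((-s) * v) - Complex.exp c * Complex.exp (-(s + 1) * v)) (Set.Ioi c) := by
    intro v hv
    have hv' : c < v := hv
    have : rexp c ≤ rexp v := Real.exp_le_exp.2 hv'.le
    simp only
    rw [max_eq_left (by linarith)]
    push_cast
    rw [sub_mul, ← Complex.exp_add]
    congr 2; ring
  have i1 : IntegrableOn (fun v : ℝ => Complex.exp ((-s) * v)) (Set.Ioi c) :=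
    integrableOn_exp_mul_complex_Ioi (by simpa using hs) c
  have i2 : IntegrableOn (fun v : ℝ => Complex.exp (-(s+1) * v)) (Set.Ioi c) :=
    integrableOn_exp_mul_complex_Ioi (by simp; linarith) c
  have i3 : IntegrableOn (fun v : ℝ => Complex.exp ((-s) * v) - Complex.exp c * Complex.exp (-(s + 1) * v)) (Set.Ioi c) :=
    i1.sub (i2.const_mul _)
  constructor
  · have : IntegrableOn (fun v : ℝ => ((max (rexp v - rexp c) 0 : ℝ) : ℂ) * Complex.exp (-(s + 1) * v)) (Set.Ioi c) :=
      i3.congr_fun e1.symm measurableSet_Ioi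
    have h2 : IntegrableOn (fun v : ℝ => ((max (rexp v - rexp c) 0 : ℝ) : ℂ) * Complex.exp (-(s + 1) * v)) (Set.Ioi (0:ℝ) \ Set.Ioi c) :=
      (integrableOn_zero (ε' := ℂ)).congr_fun (fun v hv => (e0 v hv).symm) (measurableSet_Ioi.diff measurableSet_Ioi)
    have := this.union h2
    rwa [Set.union_sdiff_cancel hsub] at this
  · rw [setIntegral_eq_of_subset_of_forall_sdiff_eq_zero measurableSet_Ioi hsub e0,
      setIntegral_congr_fun measurableSet_Ioi e1, integral_sub i1 (i2.const_mul _),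
      integral_const_mul, integral_exp_mul_complex_Ioi (by simpa using hs),
      integral_exp_mul_complex_Ioi (by simp; linarith), qq]
    have : Complex.exp (-(s+1) * c) = Complex.exp (-s * c) * (Complex.exp c)⁻¹ := by
      rw [← Complex.exp_neg, ← Complex.exp_add]; congr 1; ring
    rw [this]
    have := Complex.exp_ne_zero c
    have hs1' : -(s+1) ≠ 0 := neg_ne_zero.2 hs1
    field_simp
    ring

open MeasureTheory in
lemma lapC {s : ℂ} (hs : 1 < s.re) :
    IntegrableOn (fun v : ℝ => (((rexp v - 1)^2/2 : ℝ) : ℂ) * Complex.exp (-(s + 1) * v)) (Set.Ioi 0) ∧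
    ∫ v in Set.Ioi (0:ℝ), (((rexp v - 1)^2/2 : ℝ) : ℂ) * Complex.exp (-(s + 1) * v)
      = (s - 1)⁻¹ * qq s := by
  have hs0 : s ≠ 0 := by rintro rfl; simp at hs; linarith
  have hs1 : s + 1 ≠ 0 := by
    intro h
    have := congrArg Complex.re h
    simp at this; linarith
  have hs2 : s - 1 ≠ 0 := by
    intro h
    have := congrArg Complex.re h
    simp at this; linarith
  have e1 : (fun v : ℝ => (((rexp v - 1)^2/2 : ℝ) : ℂ) * Complex.exp (-(s + 1) * v)) =
      (fun v : ℝ => (1/2 : ℂ) * Complex.exp (-(s - 1) * v) - Complex.exp (-s * v) + (1/2 : ℂ) * Complex.exp (-(s + 1) * v)) := by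
    funext v
    have a1 : Complex.exp (-(s-1) * v) = Complex.exp v * Complex.exp v * Complex.exp (-(s+1) * v) := by
      rw [← Complex.exp_add, ← Complex.exp_add]; congr 1; ring
    have a2 : Complex.exp (-s * v) = Complex.exp v * Complex.exp (-(s+1) * v) := by
      rw [← Complex.exp_add]; congr 1; ring
    rw [a1, a2]
    push_cast
    ring
  have i0 : IntegrableOn (fun v : ℝ => Complex.exp (-(s-1) * v)) (Set.Ioi 0) :=
    integrableOn_exp_mul_complex_Ioi (by simp; linarith) 0
  have i1 : IntegrableOn (fun v : ℝ => Complex.exp ((-s) * v)) (Set.Ioi 0) :=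
    integrableOn_exp_mul_complex_Ioi (by simp; linarith) 0
  have i2 : IntegrableOn (fun v : ℝ => Complex.exp (-(s+1) * v)) (Set.Ioi 0) :=
    integrableOn_exp_mul_complex_Ioi (by simp; linarith) 0
  rw [e1]
  refine ⟨((i0.const_mul _).sub i1).add (i2.const_mul _), ?_⟩
  have i4 : IntegrableOn (fun v : ℝ => (1/2 : ℂ) * Complex.exp (-(s - 1) * v) - Complex.exp (-s * v)) (Set.Ioi 0) :=
    (i0.const_mul _).sub i1
  rw [integral_add i4 (i2.const_mul _), integral_sub (i0.const_mul _) i1,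
    integral_const_mul, integral_const_mul,
    integral_exp_mul_complex_Ioi (by simp; linarith),
    integral_exp_mul_complex_Ioi (by simp; linarith),
    integral_exp_mul_complex_Ioi (by simp; linarith), qq]
  simp only [Complex.ofReal_zero, mul_zero, Complex.exp_zero, neg_div_neg_eq]
  field_simp
  ring

open ArithmeticFunction in
noncomputable def psi1 (x : ℝ) : ℝ := ∑' n : ℕ, vonMangoldt n * max (x - n) 0

open ArithmeticFunction in
lemma psi1_eq {x : ℝ} {N : ℕ} (h : x ≤ N) : psi1 x = ∑ n ∈ Finset.range N, vonMangoldt n * max (x - n) 0 := by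
  apply tsum_eq_sum
  intro n hn
  have : N ≤ n := by simpa using hn
  have : (N:ℝ) ≤ n := by exact_mod_cast this
  rw [max_eq_right (by linarith), mul_zero]

lemma psi1_cont : Continuous psi1 := by
  rw [continuous_iff_continuousAt]
  intro x
  obtain ⟨N, hN⟩ := exists_nat_gt x
  have : (fun y : ℝ => ∑ n ∈ Finset.range N, ArithmeticFunction.vonMangoldt n * max (y - n) 0) =ᶠ[nhds x] psi1 := by
    filter_upwards [gt_mem_nhds hN] with y hy
    exact (psi1_eq (le_of_lt hy)).symm
  refine ContinuousAt.congr ?_ this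
  fun_prop

lemma psi1_nonneg (x : ℝ) : 0 ≤ psi1 x :=
  tsum_nonneg fun _ => mul_nonneg ArithmeticFunction.vonMangoldt_nonneg (le_max_right _ _)

lemma psi_eq_range (x : ℝ) : Chebyshev.psi x = ∑ n ∈ Finset.range (⌊x⌋₊ + 1), ArithmeticFunction.vonMangoldt n := by
  rw [Chebyshev.psi]
  apply Finset.sum_subset
  · intro n hn
    simp at hn ⊢
    omega
  · intro n hn hn'
    have : n = 0 := by
      simp at hn hn'
      by_contra h
      have := hn' (by omega)
      omega
    subst this; simp

lemma psi1_le {x : ℝ} (hx : 0 ≤ x) : psi1 x ≤ (log 4 + 4) * x * x := by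
  have h1 : x ≤ ((⌊x⌋₊ + 1 : ℕ) : ℝ) := by push_cast; exact (Nat.lt_floor_add_one x).le
  rw [psi1_eq h1]
  calc _ ≤ Chebyshev.psi x * x := ?_
    _ ≤ _ := mul_le_mul_of_nonneg_right (Chebyshev.psi_le_const_mul_self hx) hx
  rw [psi_eq_range, Finset.sum_mul]
  apply Finset.sum_le_sum
  intro n hn
  apply mul_le_mul_of_nonneg_left _ ArithmeticFunction.vonMangoldt_nonneg
  have : (0:ℝ) ≤ n := Nat.cast_nonneg n
  exact max_le (by linarith) hx

noncomputable def kB (s : ℂ) (n : ℕ) (v : ℝ) : ℂ :=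
  (ArithmeticFunction.vonMangoldt n : ℂ) * (((max (rexp v - n) 0 : ℝ) : ℂ) * Complex.exp (-(s + 1) * v))

open MeasureTheory in
lemma kB_int {s : ℂ} (hs : 0 < s.re) (n : ℕ) : IntegrableOn (kB s n) (Set.Ioi 0) ∧
    ∫ v in Set.Ioi (0:ℝ), kB s n v = LSeries.term (fun n => (ArithmeticFunction.vonMangoldt n : ℂ)) s n * qq s := by
  rcases Nat.eq_zero_or_pos n with rfl | hn
  · constructor
    · have : kB s 0 = fun _ => 0 := by funext v; simp [kB]
      rw [this]; exact integrableOn_zero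
    · simp [kB]
  · have hn' : (1:ℝ) ≤ n := by exact_mod_cast hn
    have hl := lapB (Real.log_nonneg hn') hs
    rw [Real.exp_log (by linarith)] at hl
    refine ⟨hl.1.const_mul _, ?_⟩
    have : ∀ v, kB s n v = (ArithmeticFunction.vonMangoldt n : ℂ) * (((max (rexp v - n) 0 : ℝ) : ℂ) * Complex.exp (-(s + 1) * v)) := fun _ => rfl
    simp_rw [this]
    rw [integral_const_mul, hl.2, LSeries.term_of_ne_zero (by omega)]
    have hnz : (n:ℂ) ≠ 0 := by exact_mod_cast (by omega : n ≠ 0)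
    rw [Complex.cpow_def_of_ne_zero hnz, ← Complex.natCast_log, div_eq_mul_inv, ← Complex.exp_neg]
    rw [show -s * (Real.log n : ℂ) = -((Real.log n : ℂ) * s) by ring]
    ring

lemma kB_norm (s : ℂ) (n : ℕ) (v : ℝ) : ((‖kB s n v‖ : ℝ) : ℂ) = kB (s.re : ℂ) n v := by
  rw [kB, kB, norm_mul, norm_mul, Complex.norm_exp, Complex.norm_real, Complex.norm_real,
    Real.norm_of_nonneg ArithmeticFunction.vonMangoldt_nonneg, Real.norm_of_nonneg (le_max_right _ _)]
  push_cast
  congr 3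
  simp

open MeasureTheory in
lemma lapA {s : ℂ} (hs : 1 < s.re) :
    ∫ v in Set.Ioi (0:ℝ), (psi1 (rexp v) : ℂ) * Complex.exp (-(s + 1) * v)
      = (- deriv riemannZeta s / riemannZeta s) * qq s := by
  have hF := fun n => (kB_int (s := s) (by linarith) n).1
  have hsum : Summable (fun n => ∫ v in Set.Ioi (0:ℝ), ‖kB s n v‖) := by
    rw [← Complex.summable_ofReal]
    have h1 : (fun n => ((∫ v in Set.Ioi (0:ℝ), ‖kB s n v‖ : ℝ) : ℂ)) =
        fun n => LSeries.term (fun n => (ArithmeticFunction.vonMangoldt n : ℂ)) (s.re : ℂ) n * qq s.re := by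
      funext n
      rw [← (kB_int (s := (s.re : ℂ)) (by simp; linarith) n).2, ← integral_complex_ofReal]
      simp_rw [kB_norm]
    rw [h1]
    exact (ArithmeticFunction.LSeriesSummable_vonMangoldt (s := (s.re : ℂ)) (by simpa using hs)).mul_right _
  have h := (hasSum_integral_of_summable_integral_norm hF hsum).tsum_eq
  have e : ∀ v, ∑' n, kB s n v = (psi1 (rexp v) : ℂ) * Complex.exp (-(s + 1) * v) := by
    intro v
    rw [psi1, Complex.ofReal_tsum, ← tsum_mul_right]
    congr 1; funext n
    rw [kB]; push_cast; ring
  simp_rw [e] at h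
  rw [← h]
  simp_rw [fun n => (kB_int (s := s) (by linarith) n).2]
  rw [tsum_mul_right, ← ArithmeticFunction.LSeries_vonMangoldt_eq_deriv_riemannZeta_div hs]
  rfl

noncomputable def gg (σ : ℝ) (v : ℝ) : ℂ :=
  (Set.Ioi (0:ℝ)).indicator (fun v : ℝ => ((psi1 (rexp v) - (rexp v - 1)^2/2 : ℝ) : ℂ) * Complex.exp (-(2 + σ : ℂ) * v)) v

open MeasureTheory in
lemma psi_int {s : ℂ} (hs : 1 < s.re) :
    IntegrableOn (fun v : ℝ => (psi1 (rexp v) : ℂ) * Complex.exp (-(s + 1) * v)) (Set.Ioi 0) := by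
  have h0 : IntegrableOn (fun v : ℝ => (log 4 + 4) * rexp (-(s.re - 1) * v)) (Set.Ioi 0) :=
    (integrableOn_exp_mul_Ioi (by linarith) 0).const_mul _
  refine Integrable.mono' h0 ?_ ?_
  · apply Continuous.aestronglyMeasurable
    have := psi1_cont
    fun_prop
  · refine Eventually.of_forall fun v => ?_
    rw [norm_mul, Complex.norm_real, Complex.norm_exp, Real.norm_of_nonneg (psi1_nonneg _)]
    have : rexp (-(s.re - 1) * v) = rexp v * rexp v * rexp ((-(s+1)*v).re) := by
      rw [← Real.exp_add, ← Real.exp_add]; congr 1; simp; ring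
    rw [this, ← mul_assoc, ← mul_assoc]
    exact mul_le_mul_of_nonneg_right (psi1_le (Real.exp_pos v).le) (Real.exp_pos _).le

open MeasureTheory in
lemma gg_int {σ : ℝ} (hσ : 0 < σ) : Integrable (gg σ) := by
  have hs : 1 < (1 + σ : ℂ).re := by simpa using hσ
  have h := (psi_int hs).sub (lapC hs).1
  have : gg σ = (Set.Ioi (0:ℝ)).indicator (fun v : ℝ => ((psi1 (rexp v) - (rexp v - 1)^2/2 : ℝ) : ℂ) * Complex.exp (-(2 + σ : ℂ) * v)) := rfl
  rw [this, integrable_indicator_iff measurableSet_Ioi]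
  refine h.congr_fun ?_ measurableSet_Ioi
  intro v _
  simp only [Pi.sub_apply]
  push_cast
  rw [← sub_mul]
  congr 2; ring

noncomputable def ell (σ w : ℝ) : ℂ := 1 + σ + 2 * π * w * Complex.I

lemma zeta_F0 {s : ℂ} (hs : 1 < s.re) :
    (- deriv riemannZeta s / riemannZeta s) * qq s - (s - 1)⁻¹ * qq s = - F0 s := by
  have hs1 : s ≠ 1 := by rintro rfl; simp at hs
  have hs2 : s - 1 ≠ 0 := sub_ne_zero.2 hs1
  have hZ := Z_ne_zero (s := s) hs.le
  rw [deriv_riemannZeta_eq_neg_inv_sub_sq_mul_add hs1, riemannZeta_eq_inv_sub_mul hs1, F0, f0, Zr,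
    iteratedDeriv_one]
  field_simp
  ring

open MeasureTheory FourierTransform in
lemma gg_fourier {σ : ℝ} (hσ : 0 < σ) (w : ℝ) :
    𝓕 (gg σ) w = - F0 (ell σ w) := by
  have hs : 1 < (ell σ w).re := by simpa [ell] using hσ
  rw [Real.fourier_real_eq_integral_exp_smul, ← zeta_F0 hs, ← lapA hs, ← (lapC hs).2,
    ← integral_sub (psi_int hs) (lapC hs).1, ← integral_indicator measurableSet_Ioi]
  congr 1; funext v
  by_cases hv : v ∈ Set.Ioi (0:ℝ)
  · rw [gg, Set.indicator_of_mem hv, Set.indicator_of_mem hv, ← sub_mul, smul_eq_mul,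
      mul_left_comm, ← Complex.exp_add]
    push_cast
    congr 2
    rw [ell]; ring
  · rw [gg, Set.indicator_of_notMem hv, Set.indicator_of_notMem hv, smul_zero]

noncomputable def JJ : ℝ := ∫ w : ℝ, (1 + ‖w‖) ^ (-(3/2) : ℝ)

lemma jap_int : MeasureTheory.Integrable (fun w : ℝ => (1 + ‖w‖) ^ (-(3/2) : ℝ)) :=
  integrable_one_add_norm (by simp; norm_num)

lemma ell_re (σ w : ℝ) : (ell σ w).re = 1 + σ := by simp [ell]

lemma TT_ell (σ w : ℝ) : TT (ell σ w) ^ (-(3/2):ℝ) ≤ (1 + ‖w‖) ^ (-(3/2) : ℝ) := by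
  have h : (ell σ w).im = 2 * π * w := by simp [ell]
  apply Real.rpow_le_rpow_of_nonpos (by positivity) _ (by norm_num)
  rw [TT, h, abs_mul, Real.norm_eq_abs, abs_of_pos (by positivity : 0 < 2 * π)]
  have := Real.pi_gt_three
  have := abs_nonneg w
  nlinarith

lemma ell_deriv (σ w : ℝ) : HasDerivAt (ell σ) (2 * π * Complex.I) w := by
  unfold ell
  have h : HasDerivAt (fun w : ℝ => (w : ℂ)) 1 w := Complex.ofRealCLM.hasDerivAt
  have := ((h.const_mul (2 * π : ℂ)).mul_const Complex.I).const_add (1 + σ : ℂ)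
  simpa using this

open MeasureTheory FourierTransform in
lemma gg_bound : ∃ C > 0, ∀ σ : ℝ, 0 < σ → σ ≤ 1 → ∀ v : ℝ, 0 < v → v ^ 2 * ‖gg σ v‖ ≤ C := by
  obtain ⟨C, hC, hF⟩ := F_bounds
  have hJ : 0 ≤ JJ := integral_nonneg fun w => by positivity
  refine ⟨C * JJ + 1, by positivity, ?_⟩
  intro σ h0 h1 v hv
  have hre : ∀ w, 1 ≤ (ell σ w).re := fun w => by rw [ell_re]; linarith
  have hb := fun w => hF (ell σ w) (hre w) (by rw [ell_re]; linarith)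
  set c : ℂ := 2 * π * Complex.I with hc
  have hcn : ‖c‖ = 2 * π := by simp [hc, abs_of_pos Real.pi_pos]
  let G0 : ℝ → ℂ := fun w => - F0 (ell σ w)
  let G1 : ℝ → ℂ := fun w => - (F1 (ell σ w) * c)
  let G2 : ℝ → ℂ := fun w => - (F2 (ell σ w) * c * c)
  have d0 : ∀ w, HasDerivAt G0 (G1 w) w := fun w =>
    ((hasDerivAt_F0 (hre w)).comp w (ell_deriv σ w)).neg
  have d1 : ∀ w, HasDerivAt G1 (G2 w) w := fun w =>
    (((hasDerivAt_F1 (hre w)).comp w (ell_deriv σ w)).mul_const c).neg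
  have c2 : Continuous G2 := by
    rw [continuous_iff_continuousAt]
    intro w
    have : ContinuousAt (fun w => F2 (ell σ w)) w :=
      ContinuousAt.comp (continuousAt_F2 (hre w)) (ell_deriv σ w).continuousAt
    exact ((this.mul_const c).mul_const c).neg
  have D0 : Differentiable ℝ G0 := fun w => (d0 w).differentiableAt
  have D1 : Differentiable ℝ G1 := fun w => (d1 w).differentiableAt
  have e0 : deriv G0 = G1 := funext fun w => (d0 w).deriv
  have e1 : deriv G1 = G2 := funext fun w => (d1 w).deriv
  have b2 : ∀ w, ‖G2 w‖ ≤ (C * (2 * π) ^ 2) * (1 + ‖w‖) ^ (-(3/2) : ℝ) := by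
    intro w
    have : ‖G2 w‖ = ‖F2 (ell σ w)‖ * (2 * π) ^ 2 := by
      simp only [G2, norm_neg, norm_mul, hcn]; ring
    rw [this]
    have := (hb w).2.2.trans (mul_le_mul_of_nonneg_left (TT_ell σ w) hC.le)
    calc _ ≤ (C * (1 + ‖w‖) ^ (-(3/2) : ℝ)) * (2 * π) ^ 2 := by gcongr
      _ = _ := by ring
  have I0 : Integrable G0 := by
    refine Integrable.mono' (jap_int.const_mul C) D0.continuous.aestronglyMeasurable
      (Eventually.of_forall fun w => ?_)
    simp only [G0, norm_neg]
    exact (hb w).1.trans (mul_le_mul_of_nonneg_left (TT_ell σ w) hC.le)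
  have I1 : Integrable G1 := by
    refine Integrable.mono' ((jap_int.const_mul C).mul_const (2 * π)) D1.continuous.aestronglyMeasurable
      (Eventually.of_forall fun w => ?_)
    simp only [G1, norm_neg, norm_mul, hcn]
    have := (hb w).2.1.trans (mul_le_mul_of_nonneg_left (TT_ell σ w) hC.le)
    gcongr
  have I2 : Integrable G2 := Integrable.mono' (jap_int.const_mul _) c2.aestronglyMeasurable
      (Eventually.of_forall b2)
  have hG : 𝓕 (gg σ) = G0 := funext fun w => gg_fourier h0 w
  have hcont : ContinuousAt (gg σ) v := by
    have : (fun v : ℝ => ((psi1 (rexp v) - (rexp v - 1)^2/2 : ℝ) : ℂ) * Complex.exp (-(2 + σ : ℂ) * v)) =ᶠ[nhds v] gg σ := by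
      filter_upwards [Ioi_mem_nhds hv] with u hu
      rw [gg, Set.indicator_of_mem hu]
    refine ContinuousAt.congr ?_ this
    have := psi1_cont
    fun_prop
  have hinv := (gg_int h0).fourierInv_fourier_eq (by rw [hG]; exact I0) hcont
  rw [Real.fourierInv_eq_fourier_neg, hG] at hinv
  have q0 := congrFun (Real.fourier_deriv I0 D0 (by rw [e0]; exact I1)) (-v)
  have q1 := congrFun (Real.fourier_deriv I1 D1 (by rw [e1]; exact I2)) (-v)
  rw [e0] at q0
  rw [e1, q0, hinv] at q1
  have hn : ‖𝓕 G2 (-v)‖ ≤ ∫ w, ‖G2 w‖ := VectorFourier.norm_fourierIntegral_le_integral_norm _ _ _ _ _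
  have hn2 : ∫ w, ‖G2 w‖ ≤ (C * (2 * π) ^ 2) * JJ := by
    rw [JJ, ← integral_const_mul]
    exact integral_mono I2.norm (jap_int.const_mul _) b2
  have hn3 : ‖𝓕 G2 (-v)‖ = (2 * π) ^ 2 * (v ^ 2 * ‖gg σ v‖) := by
    rw [q1]
    simp [abs_of_pos Real.pi_pos, abs_of_pos hv]
    ring
  have : (2 * π) ^ 2 * (v ^ 2 * ‖gg σ v‖) ≤ (2 * π) ^ 2 * (C * JJ) := by
    rw [← hn3]; linarith
  have := le_of_mul_le_mul_left this (by positivity)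
  linarith

lemma psi1_bound : ∃ C > 0, ∀ x : ℝ, 1 < x → |psi1 x - (x - 1)^2/2| ≤ C * x ^ 2 / (log x) ^ 2 := by
  obtain ⟨C, hC, h⟩ := gg_bound
  refine ⟨C, hC, fun x hx => ?_⟩
  have hl : 0 < log x := Real.log_pos hx
  have key : ∀ σ : ℝ, 0 < σ → σ ≤ 1 → (log x)^2 * (|psi1 x - (x - 1)^2/2| * rexp (-(2+σ) * log x)) ≤ C := by
    intro σ h0 h1
    have := h σ h0 h1 (log x) hl
    rw [gg, Set.indicator_of_mem (show log x ∈ Set.Ioi (0:ℝ) from hl), Real.exp_log (by linarith), norm_mul,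
      Complex.norm_real, Real.norm_eq_abs, Complex.norm_exp] at this
    simpa using this
  have lim : Tendsto (fun σ : ℝ => (log x)^2 * (|psi1 x - (x - 1)^2/2| * rexp (-(2+σ) * log x))) (nhdsWithin 0 (Set.Ioi 0))
      (nhds ((log x)^2 * (|psi1 x - (x - 1)^2/2| * rexp (-(2+0) * log x)))) := by
    apply Tendsto.mono_left _ nhdsWithin_le_nhds
    apply ContinuousAt.tendsto
      (f := fun σ : ℝ => (log x)^2 * (|psi1 x - (x - 1)^2/2| * rexp (-(2+σ) * log x)))
    fun_prop
  have h2 := le_of_tendsto lim (by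
    filter_upwards [Ioc_mem_nhdsGT (show (0:ℝ) < 1 by norm_num)] with σ hσ
    exact key σ hσ.1 hσ.2)
  have e : rexp (-(2+0) * log x) = (x^2)⁻¹ := by
    rw [← Real.exp_log (show 0 < x^2 by positivity), ← Real.exp_neg, Real.log_pow]
    congr 1; push_cast; ring
  rw [e] at h2
  rw [le_div_iff₀ (by positivity)]
  have : 0 < x^2 := by positivity
  generalize |psi1 x - (x - 1)^2/2| = A at h2 ⊢
  have h3 := mul_le_mul_of_nonneg_right h2 this.le
  field_simp at h3
  linarith

lemma psi_eq_ite {x : ℝ} (hx : 0 ≤ x) {N : ℕ} (h : x < N) :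
    Chebyshev.psi x = ∑ n ∈ Finset.range N, ArithmeticFunction.vonMangoldt n * (if (n:ℝ) ≤ x then 1 else 0) := by
  rw [psi_eq_range]
  have : Finset.range (⌊x⌋₊ + 1) = (Finset.range N).filter (fun n : ℕ => (n:ℝ) ≤ x) := by
    ext n
    simp only [Finset.mem_range, Finset.mem_filter, Nat.lt_succ_iff, Nat.le_floor_iff hx]
    constructor
    · intro hn
      refine ⟨?_, hn⟩
      exact_mod_cast lt_of_le_of_lt hn h
    · exact fun hn => hn.2
  rw [this, Finset.sum_filter]
  simp

lemma psi1_diff {x h : ℝ} (hx : 0 ≤ x) (hh : 0 ≤ h) :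
    h * Chebyshev.psi x ≤ psi1 (x + h) - psi1 x ∧ psi1 (x + h) - psi1 x ≤ h * Chebyshev.psi (x + h) := by
  obtain ⟨N, hN⟩ := exists_nat_gt (x + h)
  rw [psi1_eq hN.le, psi1_eq (show x ≤ N by linarith), psi_eq_ite hx (show x < N by linarith),
    psi_eq_ite (show 0 ≤ x + h by linarith) hN, ← Finset.sum_sub_distrib, Finset.mul_sum, Finset.mul_sum]
  constructor <;>
  · apply Finset.sum_le_sum
    intro n _
    rw [← mul_sub, mul_left_comm]
    apply mul_le_mul_of_nonneg_left _ ArithmeticFunction.vonMangoldt_nonneg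
    split_ifs <;> rcases le_total (x + h - n) 0 with h1 | h1 <;> rcases le_total (x - n) 0 with h2 | h2 <;>
      simp only [max_eq_left, max_eq_right, h1, h2] <;> linarith

lemma psi_bound : ∃ C > 0, ∀ x : ℝ, rexp 2 ≤ x → |Chebyshev.psi x - x| ≤ C * (x / log x) := by
  obtain ⟨C, hC, hb⟩ := psi1_bound
  refine ⟨2 + 5 * C, by positivity, fun x hx => ?_⟩
  have hx2 : 2 < x := by
    have := Real.add_one_lt_exp (show (2:ℝ) ≠ 0 by norm_num); linarith
  have hL : 2 ≤ log x := by
    rw [Real.le_log_iff_exp_le (by linarith)]; exact hx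
  set L := log x with hLd
  set h := x / L with hh
  have hhp : 0 < h := by positivity
  have hxL : x = h * L := by rw [hh]; field_simp
  have h2 : 2 * h ≤ x := by rw [hxL]; nlinarith
  have hbx := hb x (by linarith)
  have e1 : C * x ^ 2 / L ^ 2 = C * h ^ 2 := by rw [hxL]; field_simp
  rw [← hLd, e1] at hbx
  have hlog2 : log 2 ≤ 1 := by
    have := Real.log_two_lt_d9; linarith
  have hL1 : 1 ≤ h := by
    rw [hh, le_div_iff₀ (by linarith)]
    have := Real.log_le_sub_one_of_pos (show 0 < x by linarith)
    linarith
  have hbp : |psi1 (x+h) - (x+h-1)^2/2| ≤ 4 * C * h ^ 2 := by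
    refine (hb (x+h) (by linarith)).trans ?_
    have h1 : L ≤ log (x+h) := Real.log_le_log (by linarith) (by linarith)
    calc C * (x+h)^2 / (log (x+h))^2 ≤ C * (2 * x)^2 / L^2 := by gcongr; linarith
      _ = 4 * (C * x^2 / L^2) := by ring
      _ = _ := by rw [e1]; ring
  have hbm : |psi1 (x-h) - (x-h-1)^2/2| ≤ 4 * C * h ^ 2 := by
    refine (hb (x-h) (by linarith)).trans ?_
    have h1 : L / 2 ≤ log (x-h) := by
      have : log (x / 2) ≤ log (x - h) := Real.log_le_log (by linarith) (by linarith)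
      rw [Real.log_div (by linarith) (by norm_num)] at this
      linarith
    calc C * (x-h)^2 / (log (x-h))^2 ≤ C * x^2 / (L/2)^2 := by gcongr <;> linarith
      _ = 4 * (C * x^2 / L^2) := by field_simp; ring
      _ = _ := by rw [e1]; ring
  have d1 := (psi1_diff (show 0 ≤ x by linarith) hhp.le).1
  have d2 := (psi1_diff (show 0 ≤ x - h by linarith) hhp.le).2
  rw [sub_add_cancel] at d2
  rw [abs_le] at hbx hbp hbm
  rw [abs_le]
  constructor
  · have : h * (x - (2 + 5 * C) * h) ≤ h * Chebyshev.psi x := by nlinarith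
    have := le_of_mul_le_mul_left this hhp
    linarith
  · have : h * Chebyshev.psi x ≤ h * (x + (2 + 5 * C) * h) := by nlinarith
    have := le_of_mul_le_mul_left this hhp
    linarith

lemma theta_bound : ∃ C > 0, ∀ x : ℝ, rexp 2 ≤ x → |Chebyshev.theta x - x| ≤ C * (x / log x) := by
  obtain ⟨C, hC, hb⟩ := psi_bound
  obtain ⟨K, hK⟩ := Chebyshev.psi_sub_theta_le_mul_sqrt
  refine ⟨C + 2 * |K|, by positivity, fun x hx => ?_⟩
  have hx0 : 0 < x := (Real.exp_pos 2).trans_le hx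
  have hL : 2 ≤ log x := by
    rw [Real.le_log_iff_exp_le (by linarith)]; exact hx
  have h1 := hb x hx
  have h2 := hK x
  have h3 := Chebyshev.theta_le_psi x
  have h4 : √x ≤ 2 * (x / log x) := by
    rw [← mul_div_assoc, le_div_iff₀ (by linarith)]
    have hs := Real.sqrt_pos.2 hx0
    have := Real.log_le_sub_one_of_pos hs
    rw [Real.log_sqrt hx0.le] at this
    have e := Real.mul_self_sqrt hx0.le
    nlinarith
  have h5 : K * √x ≤ |K| * (2 * (x / log x)) :=
    (mul_le_mul_of_nonneg_right (le_abs_self K) (Real.sqrt_nonneg x)).trans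
      (mul_le_mul_of_nonneg_left h4 (abs_nonneg K))
  rw [abs_le] at h1 ⊢
  constructor <;> nlinarith [mul_nonneg (abs_nonneg K) ((Real.sqrt_nonneg x).trans h4)]

lemma pi_diff {x y : ℝ} (hx : 1 < x) (hxy : x ≤ y) :
    ((primePi y : ℝ) - primePi x) * log x ≤ Chebyshev.theta y - Chebyshev.theta x ∧
    Chebyshev.theta y - Chebyshev.theta x ≤ ((primePi y : ℝ) - primePi x) * log y := by
  have hsub : Nat.primesLE ⌊x⌋₊ ⊆ Nat.primesLE ⌊y⌋₊ := by
    intro p hp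
    rw [Nat.mem_primesLE] at hp ⊢
    exact ⟨hp.1.trans (Nat.floor_le_floor hxy), hp.2⟩
  have e1 : Chebyshev.theta y - Chebyshev.theta x = ∑ p ∈ Nat.primesLE ⌊y⌋₊ \ Nat.primesLE ⌊x⌋₊, log p := by
    rw [Chebyshev.theta_eq_sum_primesLE, Chebyshev.theta_eq_sum_primesLE, ← Finset.sum_sdiff hsub]
    ring
  have e2 : (primePi y : ℝ) - primePi x = ∑ p ∈ Nat.primesLE ⌊y⌋₊ \ Nat.primesLE ⌊x⌋₊, (1:ℝ) := by
    rw [primePi, primePi, ← Nat.primesLE_card_eq_primeCounting, ← Nat.primesLE_card_eq_primeCounting,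
      Finset.card_eq_sum_ones, Finset.card_eq_sum_ones, ← Finset.sum_sdiff hsub]
    push_cast
    ring
  have key : ∀ p ∈ Nat.primesLE ⌊y⌋₊ \ Nat.primesLE ⌊x⌋₊, x < p ∧ (p:ℝ) ≤ y := by
    intro p hp
    rw [Finset.mem_sdiff, Nat.mem_primesLE, Nat.mem_primesLE] at hp
    refine ⟨?_, (Nat.le_floor_iff (by linarith)).1 hp.1.1⟩
    by_contra h
    exact hp.2 ⟨Nat.le_floor (not_lt.1 h), hp.1.2⟩
  rw [e1, e2, Finset.sum_mul, Finset.sum_mul]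
  constructor
  · apply Finset.sum_le_sum
    intro p hp
    rw [one_mul]
    exact Real.log_le_log (by linarith) (key p hp).1.le
  · apply Finset.sum_le_sum
    intro p hp
    rw [one_mul]
    exact Real.log_le_log (by linarith [(key p hp).1]) (key p hp).2

lemma exp_quot {ε : ℕ → ℝ} (hε : ∀ n, ε n ∈ Set.Ioo (0:ℝ) 1)
    (hε0 : Tendsto ε atTop (nhds 0)) (t : ℝ) :
    Tendsto (fun n => (rexp (ε n / t) - 1) / ε n) atTop (nhds (1 / t)) := by
  have h : HasDerivAt (fun x : ℝ => rexp (x / t)) (1 / t) 0 := by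
    have := ((hasDerivAt_id (0:ℝ)).div_const t).exp
    simpa using this
  have h2 := h.tendsto_slope_zero
  have h3 : Tendsto ε atTop (nhdsWithin 0 {0}ᶜ) :=
    tendsto_nhdsWithin_iff.2 ⟨hε0, Eventually.of_forall fun n => (hε n).1.ne'⟩
  refine (h2.comp h3).congr fun n => ?_
  simp
  ring

lemma theta_lim (ε : ℕ → ℝ) (hε : ∀ n, ε n ∈ Set.Ioo (0:ℝ) 1)
    (hε0 : Tendsto ε atTop (nhds 0))
    (hnε : Tendsto (fun n : ℕ => (n : ℝ) * ε n) atTop atTop)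
    (a t : ℝ) (ht : 0 < t) :
    Tendsto (fun n : ℕ => (Chebyshev.theta (rexp (((n : ℝ) + a + ε n) / t)) - Chebyshev.theta (rexp (((n : ℝ) + a) / t)))
      / (rexp ((n:ℝ) / t) * ε n)) atTop (nhds (rexp (a / t) * (1 / t))) := by
  obtain ⟨C, hC, hb⟩ := theta_bound
  have main : Tendsto (fun n : ℕ => rexp (a / t) * ((rexp (ε n / t) - 1) / ε n)) atTop (nhds (rexp (a / t) * (1 / t))) :=
    (exp_quot hε hε0 t).const_mul _
  have hna : Tendsto (fun n : ℕ => ((n : ℝ) + a) * ε n) atTop atTop := by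
    have h1 : Tendsto (fun n : ℕ => a * ε n) atTop (nhds (a * 0)) := hε0.const_mul a
    refine (hnε.atTop_add h1).congr fun n => ?_
    ring
  have hz : Tendsto (fun n : ℕ => (2 * C * rexp ((a + 1) / t) * t) * (((n : ℝ) + a) * ε n)⁻¹) atTop (nhds 0) := by
    simpa using hna.inv_tendsto_atTop.const_mul (2 * C * rexp ((a + 1) / t) * t)
  have hdiff : Tendsto (fun n : ℕ => (Chebyshev.theta (rexp (((n : ℝ) + a + ε n) / t)) - Chebyshev.theta (rexp (((n : ℝ) + a) / t)))
      / (rexp ((n:ℝ) / t) * ε n) - rexp (a / t) * ((rexp (ε n / t) - 1) / ε n)) atTop (nhds 0) := by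
    apply squeeze_zero_norm' _ hz
    have hbig : ∀ᶠ n : ℕ in atTop, 2 * t ≤ (n:ℝ) + a := by
      filter_upwards [tendsto_natCast_atTop_atTop.eventually_ge_atTop (2 * t - a)] with n hn
      linarith
    filter_upwards [hbig] with n hn
    have he := hε n
    set e := ε n
    have he0 : 0 < e := he.1
    set m : ℝ := (n:ℝ) + a with hm
    have hm0 : 0 < m := by linarith
    have bx := hb (rexp (m / t)) (Real.exp_le_exp.2 (by rw [le_div_iff₀ ht]; exact hn))
    have by' := hb (rexp ((m + e) / t)) (Real.exp_le_exp.2 (by rw [le_div_iff₀ ht]; linarith))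
    rw [Real.log_exp] at bx by'
    have ex : rexp (m / t) = rexp (n / t) * rexp (a / t) := by
      rw [← Real.exp_add]; congr 1; rw [hm]; ring
    have ey : rexp ((m + e) / t) = rexp (n / t) * rexp (a / t) * rexp (e / t) := by
      rw [← ex, ← Real.exp_add]; congr 1; ring
    have lx : rexp (m / t) / (m / t) ≤ rexp (n / t) * rexp ((a + 1) / t) * (t / m) := by
      rw [← Real.exp_add, div_eq_mul_inv, inv_div]
      gcongr
      rw [hm, ← add_div]
      gcongr; linarith
    have ly : rexp ((m + e) / t) / ((m + e) / t) ≤ rexp (n / t) * rexp ((a + 1) / t) * (t / m) := by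
      rw [← Real.exp_add, div_eq_mul_inv, inv_div]
      have := he.2
      gcongr
      · rw [hm, ← add_div]
        exact div_le_div_of_nonneg_right (by linarith) ht.le
      · linarith
    have bx2 := bx.trans (mul_le_mul_of_nonneg_left lx hC.le)
    have by2 := by'.trans (mul_le_mul_of_nonneg_left ly hC.le)
    have hne : 0 < rexp (n / t) := Real.exp_pos _
    have eq1 : (Chebyshev.theta (rexp ((m + e) / t)) - Chebyshev.theta (rexp (m / t))) / (rexp (n / t) * e)
        - rexp (a / t) * ((rexp (e / t) - 1) / e) =
        ((Chebyshev.theta (rexp ((m + e) / t)) - rexp ((m + e) / t)) - (Chebyshev.theta (rexp (m / t)) - rexp (m / t)))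
          / (rexp (n / t) * e) := by
      generalize Chebyshev.theta (rexp ((m + e) / t)) = A
      generalize Chebyshev.theta (rexp (m / t)) = B
      rw [ex, ey]
      field_simp
      ring
    rw [eq1, norm_div, Real.norm_eq_abs, Real.norm_eq_abs, abs_of_pos (show 0 < rexp (n / t) * e by positivity),
      div_le_iff₀ (by positivity)]
    refine (abs_sub _ _).trans ((add_le_add by2 bx2).trans_eq ?_)
    field_simp
    ring
  have := hdiff.add main
  simpa using this

theorem stmt0
    (ε : ℕ → ℝ) (hε : ∀ n, ε n ∈ Set.Ioo (0:ℝ) 1)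
    (hε0 : Tendsto ε atTop (nhds 0))
    (hnε : Tendsto (fun n : ℕ => (n : ℝ) * ε n) atTop atTop)
    (a t : ℝ) (ht : 0 < t) :
    Tendsto
      (fun n : ℕ =>
        ((primePi (Real.exp (((n : ℝ) + a + ε n) / t)) : ℝ)
            - (primePi (Real.exp (((n : ℝ) + a) / t)) : ℝ))
          / (Real.exp ((n : ℝ) / t) * ε n / (n : ℝ)))
      atTop (nhds (Real.exp (a / t))) := by
  have hT := theta_lim ε hε hε0 hnε a t ht
  have hinv : Tendsto (fun n : ℕ => (n:ℝ)⁻¹) atTop (nhds 0) := tendsto_inv_atTop_nhds_zero_nat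
  have h1 : Tendsto (fun n : ℕ => (t / (1 + a * (n:ℝ)⁻¹))) atTop (nhds t) := by
    have := (tendsto_const_nhds (x := t)).div ((hinv.const_mul a).const_add 1) (by simp)
    simpa [Pi.div_def] using this
  have h2 : Tendsto (fun n : ℕ => (t / (1 + (a + ε n) * (n:ℝ)⁻¹))) atTop (nhds t) := by
    have := (tendsto_const_nhds (x := t)).div ((((hε0.const_add a)).mul hinv).const_add 1) (by simp)
    simpa [Pi.div_def] using this
  have e0 : rexp (a / t) * (1 / t) * t = rexp (a / t) := by field_simp
  have u1 := hT.mul h1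
  have u2 := hT.mul h2
  rw [e0] at u1 u2
  have hbig : ∀ᶠ n : ℕ in atTop, 0 < (n:ℝ) + a := by
    filter_upwards [tendsto_natCast_atTop_atTop.eventually_gt_atTop (-a)] with n hn
    linarith
  refine tendsto_of_tendsto_of_tendsto_of_le_of_le' u2 u1 ?_ ?_
  · filter_upwards [hbig, eventually_gt_atTop 0] with n hn hn0
    have he := (hε n).1
    have hn0' : (0:ℝ) < n := by exact_mod_cast hn0
    have hx : 1 < rexp (((n:ℝ) + a) / t) := by rw [Real.one_lt_exp_iff]; positivity
    have hd := (pi_diff hx (show rexp (((n:ℝ) + a) / t) ≤ rexp (((n:ℝ) + a + ε n) / t) from Real.exp_le_exp.2 (div_le_div_of_nonneg_right (by linarith) ht.le))).2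
    rw [Real.log_exp] at hd
    generalize (primePi (Real.exp (((n : ℝ) + a + ε n) / t)) : ℝ)
            - (primePi (Real.exp (((n : ℝ) + a) / t)) : ℝ) = D at hd ⊢
    have e1 : t / (1 + (a + ε n) * (n:ℝ)⁻¹) = n * t / (n + a + ε n) := by
      have h3 : (n:ℝ) + a + ε n ≠ 0 := by linarith
      have h4 : 1 + (a + ε n) * (n:ℝ)⁻¹ = (n + a + ε n) / n := by field_simp; ring
      rw [h4]; field_simp
    rw [e1, div_mul_div_comm, div_le_div_iff₀ (by positivity) (by positivity)]
    have hp : 0 < n + a + ε n := by linarith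
    have := mul_le_mul_of_nonneg_right hd (show 0 ≤ t * rexp (n / t) * ε n by positivity)
    field_simp at this ⊢
    linarith
  · filter_upwards [hbig, eventually_gt_atTop 0] with n hn hn0
    have he := (hε n).1
    have hn0' : (0:ℝ) < n := by exact_mod_cast hn0
    have hx : 1 < rexp (((n:ℝ) + a) / t) := by rw [Real.one_lt_exp_iff]; positivity
    have hd := (pi_diff hx (show rexp (((n:ℝ) + a) / t) ≤ rexp (((n:ℝ) + a + ε n) / t) from Real.exp_le_exp.2 (div_le_div_of_nonneg_right (by linarith) ht.le))).1
    rw [Real.log_exp] at hd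
    generalize (primePi (Real.exp (((n : ℝ) + a + ε n) / t)) : ℝ)
            - (primePi (Real.exp (((n : ℝ) + a) / t)) : ℝ) = D at hd ⊢
    have e1 : t / (1 + a * (n:ℝ)⁻¹) = n * t / (n + a) := by
      have h3 : (n:ℝ) + a ≠ 0 := by linarith
      have h4 : 1 + a * (n:ℝ)⁻¹ = (n + a) / n := by field_simp
      rw [h4]; field_simp
    rw [e1, div_mul_div_comm, div_le_div_iff₀ (by positivity) (by positivity)]
    have := mul_le_mul_of_nonneg_right hd (show 0 ≤ t * rexp (n / t) * ε n by positivity)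
    field_simp at this ⊢
    linarith
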